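/- Let T be a tree on n ≥ 4 vertices with diam(T) = 2d+1 for some positive integer d. Then 𝓔(T) has exactly two positive eigenvalues and two negative eigenvalues, i.e., the inertia of 𝓔(T) is (2, 2, n−4). -/

import Mathlib

open SimpleGraph Finset Matrix Polynomial

/-- The eccentricity of a vertex: the greatest distance from `u` to any vertex. -/
noncomputable def ecc {V : Type*} [Fintype V] (G : SimpleGraph V) (u : V) : ℕ :=
  Finset.univ.sup fun v => G.dist u v

/-- The diameter of a graph: the greatest distance between any pair of vertices. -/
noncomputable def gdiam {V : Type*} [Fintype V] (G : SimpleGraph V) : ℕ :=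
  Finset.univ.sup fun p : V × V => G.dist p.1 p.2

/-- The eccentricity matrix: `(u,v)` entry is `d(u,v)` if `d(u,v) = min (e u) (e v)`,
and `0` otherwise. -/
noncomputable def eccMatrix {V : Type*} [Fintype V] (G : SimpleGraph V) : Matrix V V ℝ :=
  Matrix.of fun u v =>
    if G.dist u v = min (ecc G u) (ecc G v) then (G.dist u v : ℝ) else 0

/-- The number of positive eigenvalues (with multiplicity) of a real matrix,
counted as roots of the characteristic polynomial. -/
noncomputable def posEigs {m : Type*} [Fintype m] [DecidableEq m] (M : Matrix m m ℝ) : ℕ :=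
  Multiset.card (M.charpoly.roots.filter fun x => 0 < x)

/-- The number of negative eigenvalues (with multiplicity). -/
noncomputable def negEigs {m : Type*} [Fintype m] [DecidableEq m] (M : Matrix m m ℝ) : ℕ :=
  Multiset.card (M.charpoly.roots.filter fun x => x < 0)

/-- The number of zero eigenvalues (with multiplicity). -/
noncomputable def zeroEigs {m : Type*} [Fintype m] [DecidableEq m] (M : Matrix m m ℝ) : ℕ :=
  Multiset.card (M.charpoly.roots.filter fun x => x = 0)

theorem aux_edge {V : Type*} {G : SimpleGraph V} (hc : G.Connected) {a b : V} {u v : V}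
    (p : G.Walk u v) (h : s(a, b) ∈ p.edges) :
    G.dist u a + 1 + G.dist b v ≤ p.length ∨ G.dist u b + 1 + G.dist a v ≤ p.length := by
  induction p with
  | nil => simp at h
  | @cons u w v huw p ih =>
    rw [Walk.edges_cons, List.mem_cons] at h
    rw [Walk.length_cons]
    rcases h with h | h
    · have hl := G.dist_le p
      rw [Sym2.eq_iff] at h
      rcases h with ⟨rfl, rfl⟩ | ⟨rfl, rfl⟩
      · left; rw [SimpleGraph.dist_self]; omega
      · right; rw [SimpleGraph.dist_self]; omega
    · have h1 : G.dist u w = 1 := SimpleGraph.dist_eq_one_iff_adj.2 huw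
      have h2 := hc.dist_triangle (u := u) (v := w) (w := a)
      have h3 := hc.dist_triangle (u := u) (v := w) (w := b)
      rcases ih h with h | h
      · left; omega
      · right; omega

theorem aux_walk {V : Type*} {G : SimpleGraph V} (hc : G.Connected) {a b : V} {u : V}
    (h : G.dist u a ≤ G.dist u b) : ∃ p : G.Walk u a, s(a, b) ∉ p.edges := by
  obtain ⟨p, hp⟩ := hc.exists_walk_length_eq_dist u a
  refine ⟨p, fun hm => ?_⟩
  have := aux_edge hc p hm
  rw [SimpleGraph.dist_self] at this
  omega

theorem aux_cross {V : Type*} {G : SimpleGraph V} (hG : G.IsTree) {a b : V} (hab : G.Adj a b)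
    {u v : V} (hu : G.dist u a ≤ G.dist u b) (hv : G.dist v b ≤ G.dist v a) :
    G.dist u v = G.dist u a + G.dist v b + 1 ∨ G.dist u v = G.dist u b + G.dist v a + 1 := by
  have hc := hG.connected
  have hb : ∀ p : G.Walk a b, s(a, b) ∈ p.edges :=
    isBridge_iff_forall_walk_mem_edges.1
      (isAcyclic_iff_forall_adj_isBridge.1 hG.isAcyclic hab)
  obtain ⟨p, hp⟩ := aux_walk hc hu
  obtain ⟨q, hq⟩ := aux_walk hc hv
  obtain ⟨r, hr⟩ := hc.exists_walk_length_eq_dist u v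
  have h1 := hb ((p.reverse.append r).append q)
  rw [Sym2.eq_swap] at hq
  simp only [Walk.edges_append, Walk.edges_reverse, List.mem_append, List.mem_reverse, hp, hq,
    false_or, or_false] at h1
  have h2 := aux_edge hc r h1
  have h3 : G.dist a b = 1 := SimpleGraph.dist_eq_one_iff_adj.2 hab
  have h4 := hc.dist_triangle (u := u) (v := a) (w := v)
  have h5 := hc.dist_triangle (u := a) (v := b) (w := v)
  have h6 := G.dist_comm (u := a) (v := v)
  have h7 := G.dist_comm (u := b) (v := v)
  omega

theorem aux_struct {V : Type*} [Fintype V] (T : SimpleGraph V) (d : ℕ)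
    (hT : T.IsTree) (hdiam : gdiam T = 2*d + 1) :
    ∃ (S : V → Prop) (h : V → ℕ), (∀ u, h u ≤ d) ∧
      (∀ u v, S u → ¬ S v → T.dist u v = h u + h v + 1) ∧
      (∀ u v, (S u ↔ S v) → T.dist u v ≤ h u + h v) ∧
      (∃ u, S u ∧ h u = d) ∧ (∃ u, ¬ S u ∧ h u = d) ∧
      (∃ u, S u ∧ h u = 0) ∧ (∃ u, ¬ S u ∧ h u = 0) := by
  classical
  have hc := hT.connected
  have hle : ∀ u v, T.dist u v ≤ 2*d+1 := fun u v => by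
    rw [← hdiam]
    exact Finset.le_sup (f := fun p : V × V => T.dist p.1 p.2) (Finset.mem_univ (u, v))
  have := hc.nonempty
  obtain ⟨⟨u0, v0⟩, -, h0⟩ := Finset.exists_mem_eq_sup (Finset.univ : Finset (V × V))
    Finset.univ_nonempty (fun p : V × V => T.dist p.1 p.2)
  change gdiam T = T.dist u0 v0 at h0
  rw [hdiam] at h0
  obtain ⟨p, hp⟩ := hc.exists_walk_length_eq_dist u0 v0
  obtain ⟨a, b, hab, ha, hb⟩ : ∃ a b, T.Adj a b ∧ T.dist u0 a ≤ d ∧ T.dist b v0 ≤ d := by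
    refine ⟨p.getVert d, p.getVert (d+1), p.adj_getVert_succ (by omega), ?_, ?_⟩
    · refine (T.dist_le (p.take d)).trans ?_
      rw [Walk.take_length]; omega
    · refine (T.dist_le (p.drop (d+1))).trans ?_
      rw [Walk.drop_length]; omega
  have hab1 : T.dist a b = 1 := SimpleGraph.dist_eq_one_iff_adj.2 hab
  have hba1 : T.dist b a = 1 := SimpleGraph.dist_eq_one_iff_adj.2 hab.symm
  have haa : T.dist a a = 0 := SimpleGraph.dist_self
  have hbb : T.dist b b = 0 := SimpleGraph.dist_self
  have tri := fun x y z => hc.dist_triangle (u := x) (v := y) (w := z)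
  have com := fun x y => T.dist_comm (u := x) (v := y)
  have hne : ∀ u, T.dist u a ≠ T.dist u b := fun u he => by
    have := aux_cross hT hab he.le he.ge
    have h1 : T.dist u u = 0 := SimpleGraph.dist_self
    omega
  have cross : ∀ u v, T.dist u a < T.dist u b → T.dist v b < T.dist v a →
      T.dist u v = T.dist u a + T.dist v b + 1 := fun u v hu hv => by
    have := aux_cross hT hab hu.le hv.le
    have t1 := tri u a v
    have t2 := tri a b v
    have := com a v
    have := com b v
    omega
  have e1 := tri u0 a v0
  have e2 := tri a b v0
  have e3 := tri u0 b v0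
  have e4 := tri u0 a b
  have e5 := com a v0
  have e6 := com b v0
  have hu0 : T.dist u0 a < T.dist u0 b := by omega
  have hv0 : T.dist v0 b < T.dist v0 a := by omega
  refine ⟨fun u => T.dist u a < T.dist u b, fun u => min (T.dist u a) (T.dist u b),
    ?_, ?_, ?_, ⟨u0, hu0, by beta_reduce; omega⟩, ⟨v0, by beta_reduce; omega, by beta_reduce; omega⟩,
    ⟨a, by beta_reduce; omega, by beta_reduce; omega⟩, ⟨b, by beta_reduce; omega, by beta_reduce; omega⟩⟩
  · intro u
    rcases (hne u).lt_or_gt with h | h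
    · have := cross u v0 h hv0
      have := hle u v0
      beta_reduce; omega
    · have := cross u0 u hu0 h
      have := hle u0 u
      beta_reduce; omega
  · intro u v hu hv
    have h : T.dist v b < T.dist v a := by have := hne v; omega
    have := cross u v hu h
    beta_reduce; omega
  · intro u v huv
    have t1 := tri u a v
    have t2 := tri u b v
    have := com a v
    have := com b v
    have := hne u
    have := hne v
    by_cases h : T.dist u a < T.dist u b
    · have := huv.1 h
      beta_reduce; omega
    · have : ¬ T.dist v a < T.dist v b := fun h' => h (huv.2 h')
      beta_reduce; omega

theorem aux_charpoly4 (p q r s c : ℝ) :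
    (!![0, 0, c*r, s; 0, 0, r, 0; c*p, q, 0, 0; p, 0, 0, 0] : Matrix (Fin 4) (Fin 4) ℝ).charpoly
      = X^4 - C (p*s+q*r+c^2*p*r) * X^2 + C (p*q*r*s) := by
  simp only [Matrix.charpoly, Matrix.det_succ_row_zero, Matrix.charmatrix_apply]
  simp [Fin.sum_univ_succ, Fin.succAbove, Matrix.charmatrix_apply, Matrix.diagonal]
  ring

theorem aux_roots {P Q : ℝ} (hP : 0 < P) (hQ : 0 < Q) (hD : 4 * Q ≤ P^2) :
    ∃ s t : ℝ, 0 < s ∧ 0 < t ∧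
      (X^4 - C P * X^2 + C Q : ℝ[X]) = (X - C s) * (X - C (-s)) * (X - C t) * (X - C (-t)) := by
  have h1 : √(P^2 - 4*Q) ^ 2 = P^2 - 4*Q := Real.sq_sqrt (by linarith)
  have h0 := Real.sqrt_nonneg (P^2 - 4*Q)
  set w := √(P^2 - 4*Q) with hw
  have h2 : w < P := by nlinarith
  refine ⟨√((P+w)/2), √((P-w)/2), Real.sqrt_pos.2 (by linarith), Real.sqrt_pos.2 (by linarith), ?_⟩
  have hs : √((P+w)/2)^2 = (P+w)/2 := Real.sq_sqrt (by linarith)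
  have ht : √((P-w)/2)^2 = (P-w)/2 := Real.sq_sqrt (by linarith)
  set s := √((P+w)/2)
  set t := √((P-w)/2)
  have hP' : P = s^2 + t^2 := by rw [hs, ht]; ring
  have hQ' : Q = s^2 * t^2 := by rw [hs, ht]; linarith
  rw [hP', hQ']
  simp only [C_add, C_mul, C_pow, C_neg]
  ring

theorem aux_count {V : Type*} [Fintype V] [DecidableEq V] (M : Matrix V V ℝ) (k : ℕ) {s t : ℝ}
    (hs : 0 < s) (ht : 0 < t)
    (h : M.charpoly = X^k * ((X - C s) * (X - C (-s)) * (X - C t) * (X - C (-t)))) :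
    posEigs M = 2 ∧ negEigs M = 2 ∧ zeroEigs M = k := by
  have hr : M.charpoly.roots = k • ({0} : Multiset ℝ) + ({s} + {-s} + {t} + {-t}) := by
    have a1 : ∀ z : ℝ, (X - C z) ≠ 0 := X_sub_C_ne_zero
    rw [h, roots_mul, roots_mul, roots_mul, roots_mul, roots_pow, roots_X]
    · simp only [roots_X_sub_C]
    all_goals
      simp only [ne_eq, mul_eq_zero, pow_eq_zero_iff', X_ne_zero, a1, or_self, false_and,
        not_false_eq_true]
  have hs' := hs.not_gt
  have ht' := ht.not_gt
  have hs2 := hs.ne'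
  have ht2 := ht.ne'
  simp only [posEigs, negEigs, zeroEigs, hr, Multiset.filter_add, Multiset.filter_nsmul,
    Multiset.filter_singleton]
  simp [hs, ht, hs', ht', hs2, ht2]

theorem stmt2 {V : Type*} [Fintype V] [DecidableEq V] (T : SimpleGraph V) (n d : ℕ)
    (hT : T.IsTree) (hn : Fintype.card V = n) (h4 : 4 ≤ n) (hd : 1 ≤ d)
    (hdiam : gdiam T = 2*d + 1) :
    posEigs (eccMatrix T) = 2 ∧ negEigs (eccMatrix T) = 2 ∧
      zeroEigs (eccMatrix T) = n - 4 := by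
  classical
  obtain ⟨S, h, hle, hcr, hsame, ⟨u1, hu1, hu1'⟩, ⟨u2, hu2, hu2'⟩, ⟨u3, hu3, hu3'⟩,
    ⟨u4, hu4, hu4'⟩⟩ := aux_struct T d hT hdiam
  have hecc : ∀ u, ecc T u = h u + d + 1 := by
    intro u
    apply le_antisymm
    · refine Finset.sup_le fun v _ => ?_
      have := hle u
      have := hle v
      by_cases hu : S u <;> by_cases hv : S v
      · have := hsame u v (by tauto); omega
      · have := hcr u v hu hv; omega
      · have := hcr v u hv hu
        have := T.dist_comm (u := u) (v := v)
        omega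
      · have := hsame u v (by tauto); omega
    · by_cases hu : S u
      · have h1 := Finset.le_sup (f := fun v => T.dist u v) (Finset.mem_univ u2)
        have h2 := hcr u u2 hu hu2
        change T.dist u u2 ≤ ecc T u at h1
        omega
      · have h1 := Finset.le_sup (f := fun v => T.dist u v) (Finset.mem_univ u1)
        have h2 := hcr u1 u hu1 hu
        have := T.dist_comm (u := u) (v := u1)
        change T.dist u u1 ≤ ecc T u at h1
        omega
  let x : V → ℝ := fun u => if S u ∧ h u = d then 1 else 0
  let f : V → ℝ := fun u => if S u ∧ h u ≠ d then (h u + d + 1 : ℝ) else 0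
  let y : V → ℝ := fun u => if ¬ S u ∧ h u = d then 1 else 0
  let g : V → ℝ := fun u => if ¬ S u ∧ h u ≠ d then (h u + d + 1 : ℝ) else 0
  let c : ℝ := 2*d+1
  let U : Matrix V (Fin 4) ℝ := Matrix.of fun u j => ![x u, f u, y u, g u] j
  let W : Matrix (Fin 4) V ℝ :=
    Matrix.of fun j u => ![c * y u + g u, y u, c * x u + f u, x u] j
  have hM : eccMatrix T = U * W := by
    ext u v
    have l1 := hle u
    have l2 := hle v
    rw [Matrix.mul_apply]
    simp only [eccMatrix, Matrix.of_apply, hecc, Fin.sum_univ_four, U, W]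
    simp only [Matrix.cons_val]
    by_cases hu : S u <;> by_cases hv : S v
    · have := hsame u v (by tauto)
      rw [if_neg (by omega)]
      simp [x, f, y, g, hu, hv]
    · have e := hcr u v hu hv
      rw [e]
      by_cases hud : h u = d <;> by_cases hvd : h v = d
      · rw [if_pos (by omega)]
        simp [x, f, y, g, hu, hv, hud, hvd, c]; ring
      · rw [if_pos (by omega)]
        simp [x, f, y, g, hu, hv, hud, hvd, c]; ring
      · rw [if_pos (by omega)]
        simp [x, f, y, g, hu, hv, hud, hvd, c]
      · rw [if_neg (by omega)]
        simp [x, f, y, g, hu, hv, hud, hvd, c]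
    · have e := hcr v u hv hu
      rw [T.dist_comm] at e
      rw [e]
      by_cases hud : h u = d <;> by_cases hvd : h v = d
      · rw [if_pos (by omega)]
        simp [x, f, y, g, hu, hv, hud, hvd, c]; ring
      · rw [if_pos (by omega)]
        simp [x, f, y, g, hu, hv, hud, hvd, c]
      · rw [if_pos (by omega)]
        simp [x, f, y, g, hu, hv, hud, hvd, c]; ring
      · rw [if_neg (by omega)]
        simp [x, f, y, g, hu, hv, hud, hvd, c]
    · have := hsame u v (by tauto)
      rw [if_neg (by omega)]
      simp [x, f, y, g, hu, hv]
  have key : ∀ (z : V → ℝ) (u : V), z u ≠ 0 → 0 < ∑ u, z u * z u := fun z u hz =>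
    Finset.sum_pos' (fun i _ => mul_self_nonneg _) ⟨u, Finset.mem_univ u, mul_self_pos.2 hz⟩
  have hx : 0 < ∑ u, x u * x u := key x u1 (by simp [x, hu1, hu1'])
  have hy : 0 < ∑ u, y u * y u := key y u2 (by simp [y, hu2, hu2'])
  have hf : 0 < ∑ u, f u * f u := key f u3 (by
    have : (0:ℕ) ≠ d := by omega
    simp only [f, hu3, hu3', ne_eq, this, not_false_eq_true, and_self, if_true]
    positivity)
  have hg : 0 < ∑ u, g u * g u := key g u4 (by
    have : (0:ℕ) ≠ d := by omega
    simp only [g, hu4, hu4', ne_eq, this, not_false_eq_true, and_self, if_true]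
    positivity)
  have z1 : ∀ u, x u * f u = 0 := fun u => by simp only [x, f]; split_ifs <;> first | tauto | simp
  have z2 : ∀ u, x u * y u = 0 := fun u => by simp only [x, y]; split_ifs <;> first | tauto | simp
  have z3 : ∀ u, x u * g u = 0 := fun u => by simp only [x, g]; split_ifs <;> first | tauto | simp
  have z4 : ∀ u, f u * y u = 0 := fun u => by simp only [f, y]; split_ifs <;> first | tauto | simp
  have z5 : ∀ u, f u * g u = 0 := fun u => by simp only [f, g]; split_ifs <;> first | tauto | simp
  have z6 : ∀ u, y u * g u = 0 := fun u => by simp only [y, g]; split_ifs <;> first | tauto | simp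
  have y1 : ∀ u, f u * x u = 0 := fun u => by rw [mul_comm]; exact z1 u
  have y2 : ∀ u, y u * x u = 0 := fun u => by rw [mul_comm]; exact z2 u
  have y3 : ∀ u, g u * x u = 0 := fun u => by rw [mul_comm]; exact z3 u
  have y4 : ∀ u, y u * f u = 0 := fun u => by rw [mul_comm]; exact z4 u
  have y5 : ∀ u, g u * f u = 0 := fun u => by rw [mul_comm]; exact z5 u
  have y6 : ∀ u, g u * y u = 0 := fun u => by rw [mul_comm]; exact z6 u
  set p := ∑ u, x u * x u with hp
  set q := ∑ u, f u * f u with hq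
  set r := ∑ u, y u * y u with hr
  set s := ∑ u, g u * g u with hs
  have hWU : W * U = !![0, 0, c*r, s; 0, 0, r, 0; c*p, q, 0, 0; p, 0, 0, 0] := by
    ext i j
    rw [Matrix.mul_apply]
    fin_cases i <;> fin_cases j <;>
      simp [U, W, add_mul, mul_assoc, z1, z2, z3, z4, z5, z6, y1, y2, y3, y4, y5, y6,
        Finset.sum_add_distrib, ← Finset.mul_sum, hp, hq, hr, hs]
  have hch := Matrix.charpoly_mul_comm_of_le U W (by simp; omega)
  rw [← hM, hWU, aux_charpoly4, hn, Fintype.card_fin] at hch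
  have hps : 0 < p * s := by positivity
  have hqr : 0 < q * r := by positivity
  have hpr : 0 ≤ c^2*p*r := by positivity
  obtain ⟨α, β, hα, hβ, he⟩ := aux_roots (P := p*s+q*r+c^2*p*r) (Q := p*q*r*s)
    (by positivity) (by positivity) (by nlinarith [sq_nonneg (p*s-q*r)])
  rw [he] at hch
  exact aux_count _ _ hα hβ hch
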